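/- Let r ≥ 3 and let n be a positive integer with n ≡ 0 (mod 2r+1). The blowup G = W_5^r[2n/(2r+1), …, 2n/(2r+1), n/(2r+1), …, n/(2r+1)] (with r-2 parts of size 2n/(2r+1) and 5 parts of size n/(2r+1)) has exactly n vertices and minimum positive codegree δ⁺_{r-1}(G) = 2n/(2r+1). In particular, for infinitely many n there exists an n-vertex T_r-free non-r-partite r-graph with δ⁺_{r-1} = 2n/(2r+1). -/

import Mathlib

variable {V : Type*} [Fintype V] [DecidableEq V]

/-- The (r-1)-shadow of an r-graph: all (r-1)-sets contained in some edge. -/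
def sshadow (r : ℕ) (H : Finset (Finset V)) : Finset (Finset V) :=
  Finset.univ.filter (fun e => e.card = r - 1 ∧ ∃ E ∈ H, e ⊆ E)

/-- The codegree neighborhood of a set `e`: vertices `v` with `e ∪ {v} ∈ H`. -/
def nbhd (H : Finset (Finset V)) (e : Finset V) : Finset V :=
  Finset.univ.filter (fun v => insert v e ∈ H)

/-- The neighborhood of a vertex. -/
def vnbhd (H : Finset (Finset V)) (v : V) : Finset V :=
  Finset.univ.filter (fun u => u ≠ v ∧ ∃ E ∈ H, u ∈ E ∧ v ∈ E)

/-- `H` is T_r-free. -/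
def IsTrFree (r : ℕ) (H : Finset (Finset V)) : Prop :=
  ¬ ∃ (S W : Finset V) (a b : V),
      S.card = r - 1 ∧ W.card = r - 2 ∧ a ≠ b ∧
      a ∉ S ∧ b ∉ S ∧ a ∉ W ∧ b ∉ W ∧ Disjoint S W ∧
      insert a S ∈ H ∧ insert b S ∈ H ∧ insert a (insert b W) ∈ H

/-- A set of vertices is independent. -/
def IsIndep (H : Finset (Finset V)) (I : Finset V) : Prop :=
  ∀ E ∈ H, (E ∩ I).card ≤ 1

/-- `H` is r-partite. -/
def IsRPartite (r : ℕ) (H : Finset (Finset V)) : Prop :=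
  ∃ P : Fin r → Finset V, (∀ v : V, ∃! i, v ∈ P i) ∧ ∀ i, IsIndep H (P i)

/-- Minimum positive codegree. -/
noncomputable def minPosCodeg (r : ℕ) (H : Finset (Finset V)) : ℕ :=
  sInf {k | ∃ e ∈ sshadow r H, (nbhd H e).card = k}

/-- Vertex type of the blowup of the r-uniform 5-wheel, with u-parts of sizes `x i`
and v-parts of sizes `y j`. -/
abbrev WheelVert (r : ℕ) (x : Fin (r - 2) → ℕ) (y : Fin 5 → ℕ) : Type :=
  (Σ i : Fin (r - 2), Fin (x i)) ⊕ (Σ j : Fin 5, Fin (y j))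

/-- The part containing a given vertex of the blowup. -/
def wpart {r : ℕ} {x : Fin (r - 2) → ℕ} {y : Fin 5 → ℕ} :
    WheelVert r x y → Fin (r - 2) ⊕ Fin 5
  | Sum.inl a => Sum.inl a.1
  | Sum.inr b => Sum.inr b.1

/-- The blowup `W_5^r[x_1, …, x_{r-2}, y_1, …, y_5]` of the r-uniform 5-wheel:
edges are all r-sets having exactly one vertex in each u-part and exactly one vertex in
each of two (cyclically) consecutive v-parts. -/
def blowupW5 (r : ℕ) (x : Fin (r - 2) → ℕ) (y : Fin 5 → ℕ) :
    Finset (Finset (WheelVert r x y)) :=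
  Finset.univ.filter (fun E =>
    ∃ j : Fin 5,
      (∀ i : Fin (r - 2), (E.filter (fun a => wpart a = Sum.inl i)).card = 1) ∧
      (E.filter (fun a => wpart a = Sum.inr j)).card = 1 ∧
      (E.filter (fun a => wpart a = Sum.inr (j + 1))).card = 1 ∧
      (∀ j' : Fin 5, j' ≠ j → j' ≠ j + 1 →
        (E.filter (fun a => wpart a = Sum.inr j')).card = 0))

/-!
The blowup inherits its codegrees, its `T_r`-freeness and its non-`r`-partiteness from the wheel
itself. An `(r-1)`-set in the shadow of the wheel either misses some `u_i`, and then extends to an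
edge only by `u_i`, or it is `{u_1, …, u_{r-2}, v_j}`, and then extends exactly by `v_{j-1}` and
`v_{j+1}`. In the blowup the codegrees are therefore the numbers `x_i` and `y_{j-1} + y_{j+1}`.

In both cases the extending vertices are independent, whereas in a `T_r` the two vertices extending
the common `(r-1)`-set lie together in the third edge. Finally, in a coloring with `r` colors that
is injective on every edge, vertices extending the same `(r-1)`-set get the one color missing from
it. So `v_0`, `v_2` and `v_4` have the same color, although some edge contains both `v_4` and `v_0`.
-/

open Finset
open scoped FinsetFamily

theorem injOn_and_image_eq_iff_card_fiber {α β : Type*} [DecidableEq β] {f : α → β}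
    {s : Finset α} {t : Finset β} :
    Set.InjOn f s ∧ s.image f = t ↔ ∀ b, #{a ∈ s | f a = b} = if b ∈ t then 1 else 0 := by
  constructor
  · rintro ⟨hinj, rfl⟩ b
    split_ifs with hb
    · obtain ⟨a, ha, rfl⟩ := mem_image.1 hb
      refine card_eq_one.2 ⟨a, ext fun a' => ?_⟩
      rw [mem_filter, mem_singleton]
      exact ⟨fun h => hinj h.1 ha h.2, by rintro rfl; exact ⟨ha, rfl⟩⟩
    · exact card_eq_zero.2 (filter_eq_empty_iff.2 fun a ha hab => hb (hab ▸ mem_image_of_mem f ha))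
  · intro h
    refine ⟨fun a ha a' ha' haa' => ?_, ext fun b => ?_⟩
    · have hle : #{x ∈ s | f x = f a'} ≤ 1 := by rw [h]; split_ifs <;> simp
      exact card_le_one.1 hle _ (mem_filter.2 ⟨ha, haa'⟩) _ (mem_filter.2 ⟨ha', rfl⟩)
    · rw [mem_image, ← filter_nonempty_iff, ← card_pos, h]
      split_ifs <;> simpa

theorem image_image_surjInv {α β : Type*} [DecidableEq α] [DecidableEq β] {f : α → β}
    (hf : f.Surjective) (s : Finset β) : (s.image (Function.surjInv hf)).image f = s := by
  rw [image_image, (Function.rightInverse_surjInv hf).comp_eq_id, image_id]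

section Hypergraph

variable {r : ℕ} {H : Finset (Finset V)} {e : Finset V} {v : V}

theorem mem_nbhd : v ∈ nbhd H e ↔ insert v e ∈ H := by
  simp only [nbhd, mem_filter_univ]

theorem notMem_of_mem_nbhd (hH : (H : Set (Finset V)).Sized r) (he : #e < r)
    (hv : v ∈ nbhd H e) : v ∉ e := fun hve =>
  he.ne (hH (insert_eq_of_mem hve ▸ mem_nbhd.1 hv))

theorem sshadow_eq_shadow (hr : 0 < r) (hH : (H : Set (Finset V)).Sized r) :
    sshadow r H = ∂ H := by
  ext e
  simp only [sshadow, mem_filter_univ, mem_shadow_iff_exists_mem_card_add_one]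
  constructor
  · rintro ⟨he, E, hE, heE⟩
    exact ⟨E, hE, heE, by have := hH hE; omega⟩
  · rintro ⟨E, hE, heE, hcard⟩
    exact ⟨by have := hH hE; omega, E, hE, heE⟩

theorem isTrFree_of_isIndep_nbhd (h : ∀ e ∈ ∂ H, IsIndep H (nbhd H e)) : IsTrFree r H := by
  rintro ⟨S, W, a, b, -, -, hab, haS, -, -, -, -, haSH, hbSH, habWH⟩
  have hS : S ∈ ∂ H := mem_shadow_iff_insert_mem.2 ⟨a, haS, haSH⟩
  refine hab (card_le_one.1 (h S hS _ habWH) a ?_ b ?_)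
  · exact mem_inter.2 ⟨mem_insert_self a _, mem_nbhd.2 haSH⟩
  · exact mem_inter.2 ⟨mem_insert_of_mem (mem_insert_self b W), mem_nbhd.2 hbSH⟩

end Hypergraph

section Coloring

variable {α : Type*} [DecidableEq α] {r : ℕ} {H : Finset (Finset α)}

theorem isRPartite_iff_exists_coloring [Finite α] :
    IsRPartite r H ↔ ∃ c : α → Fin r, ∀ E ∈ H, Set.InjOn c E := by
  constructor
  · rintro ⟨P, hP, hindep⟩
    choose c hc _ using hP
    refine ⟨c, fun E hE a ha b hb hab => card_le_one.1 (hindep (c a) E hE) a ?_ b ?_⟩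
    · exact mem_inter.2 ⟨ha, hc a⟩
    · exact mem_inter.2 ⟨hb, hab ▸ hc b⟩
  · rintro ⟨c, hc⟩
    have := Fintype.ofFinite α
    refine ⟨fun i => {a | c a = i}, fun a => ?_, fun i E hE => card_le_one.2 ?_⟩
    · simp
    · intro a ha b hb
      simp only [mem_inter, mem_filter_univ] at ha hb
      exact hc E hE ha.1 hb.1 (ha.2.trans hb.2.symm)

theorem color_eq_of_insert_mem {c : α → Fin r} (hc : ∀ E ∈ H, Set.InjOn c E) {e : Finset α}
    (he : #e + 1 = r) {p q : α} (hp : p ∉ e) (hq : q ∉ e) (hpH : insert p e ∈ H)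
    (hqH : insert q e ∈ H) : c p = c q := by
  have color_mem_compl {a : α} (ha : a ∉ e) (haH : insert a e ∈ H) : c a ∈ (e.image c)ᶜ := by
    have := (Set.injOn_insert (mem_coe.not.2 ha)).1 (coe_insert a e ▸ hc _ haH)
    simpa using this.2
  have hcard : #(e.image c)ᶜ = 1 := by
    have hinj : Set.InjOn c e := (hc _ hpH).mono (by simp)
    rw [card_compl, card_image_of_injOn hinj, Fintype.card_fin]
    omega
  exact card_le_one.1 hcard.le _ (color_mem_compl hp hpH) _ (color_mem_compl hq hqH)

end Coloring

section Blowup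

/-- The blowup of a hypergraph `F` along `π : α → ι`, which sends a vertex to the index of its part:
the sets of vertices that `π` maps bijectively onto an edge of `F`.
Injectivity on `E` is expressed by cardinalities, which keeps the definition computable. -/
def blowup {α ι : Type*} [Fintype α] [DecidableEq ι] (π : α → ι) (F : Finset (Finset ι)) :
    Finset (Finset α) :=
  {E | #(E.image π) = #E ∧ E.image π ∈ F}

variable {α ι : Type*} [Fintype α] [DecidableEq ι] {π : α → ι} {F : Finset (Finset ι)} {r : ℕ}
  {e E : Finset α} {v : α}

theorem mem_blowup : E ∈ blowup π F ↔ Set.InjOn π E ∧ E.image π ∈ F := by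
  simp only [blowup, mem_filter_univ, card_image_iff]

theorem sized_blowup (hF : (F : Set (Finset ι)).Sized r) :
    (blowup π F : Set (Finset α)).Sized r := fun E hE => by
  have ⟨hinj, hEF⟩ := mem_blowup.1 hE
  rw [← card_image_of_injOn hinj, hF hEF]

variable [DecidableEq α]

theorem insert_mem_blowup (hv : v ∉ e) :
    insert v e ∈ blowup π F ↔
      (Set.InjOn π e ∧ π v ∉ e.image π) ∧ insert (π v) (e.image π) ∈ F := by
  rw [mem_blowup, coe_insert, Set.injOn_insert (mem_coe.not.2 hv), ← coe_image, mem_coe,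
    image_insert]

theorem injOn_of_mem_shadow_blowup (he : e ∈ ∂ (blowup π F)) : Set.InjOn π e :=
  have ⟨_, hE, heE⟩ := exists_subset_of_mem_shadow he
  (mem_blowup.1 hE).1.mono (coe_subset.2 heE)

theorem image_mem_shadow_of_mem_shadow_blowup (he : e ∈ ∂ (blowup π F)) : e.image π ∈ ∂ F := by
  obtain ⟨v, hv, hvF⟩ := mem_shadow_iff_insert_mem.1 he
  have ⟨⟨_, hπv⟩, hF⟩ := (insert_mem_blowup hv).1 hvF
  exact mem_shadow_iff_insert_mem.2 ⟨π v, hπv, hF⟩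

theorem image_surjInv_mem_blowup (hπ : π.Surjective) {s : Finset ι} (hs : s ∈ F) :
    s.image (Function.surjInv hπ) ∈ blowup π F := by
  rw [mem_blowup, image_image_surjInv, ← card_image_iff, image_image_surjInv,
    card_image_of_injective _ (Function.injective_surjInv hπ)]
  exact ⟨rfl, hs⟩

theorem image_shadow_blowup (hπ : π.Surjective) : (∂ (blowup π F)).image (image π) = ∂ F := by
  ext s
  refine ⟨fun hs => ?_, fun hs => mem_image.2 ⟨s.image (Function.surjInv hπ), ?_, ?_⟩⟩
  · obtain ⟨e, he, rfl⟩ := mem_image.1 hs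
    exact image_mem_shadow_of_mem_shadow_blowup he
  · obtain ⟨p, hp, hpF⟩ := mem_shadow_iff_insert_mem.1 hs
    refine mem_shadow_iff_insert_mem.2 ⟨Function.surjInv hπ p, ?_, ?_⟩
    · rwa [Function.Injective.mem_finset_image (Function.injective_surjInv hπ)]
    · rw [← image_insert]
      exact image_surjInv_mem_blowup hπ hpF
  · exact image_image_surjInv hπ s

theorem isRPartite_blowup (hπ : π.Surjective) :
    IsRPartite r (blowup π F) ↔ IsRPartite r F := by
  have := Finite.of_surjective π hπ
  simp only [isRPartite_iff_exists_coloring]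
  constructor
  · rintro ⟨c, hc⟩
    refine ⟨c ∘ Function.surjInv hπ, fun E hE => ?_⟩
    have := hc _ (image_surjInv_mem_blowup hπ hE)
    rw [coe_image] at this
    exact this.comp (Function.injective_surjInv hπ).injOn (Set.mapsTo_image _ _)
  · rintro ⟨c, hc⟩
    refine ⟨c ∘ π, fun E hE => ?_⟩
    have ⟨hinj, hEF⟩ := mem_blowup.1 hE
    exact (coe_image (f := π) ▸ hc _ hEF).comp hinj (Set.mapsTo_image π E)

variable [Fintype ι]

theorem apply_mem_nbhd_image (hv : v ∈ nbhd (blowup π F) e) : π v ∈ nbhd F (e.image π) := by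
  rw [mem_nbhd, ← image_insert]
  exact (mem_blowup.1 (mem_nbhd.1 hv)).2

theorem isIndep_nbhd_blowup (h : ∀ s ∈ ∂ F, IsIndep F (nbhd F s)) (he : e ∈ ∂ (blowup π F)) :
    IsIndep (blowup π F) (nbhd (blowup π F) e) := fun E hE => by
  have ⟨hinj, hEF⟩ := mem_blowup.1 hE
  refine card_le_one.2 fun a ha b hb => ?_
  rw [mem_inter] at ha hb
  have hs := image_mem_shadow_of_mem_shadow_blowup he
  refine hinj ha.1 hb.1 (card_le_one.1 (h _ hs _ hEF) _ ?_ _ ?_)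
  · exact mem_inter.2 ⟨mem_image_of_mem π ha.1, apply_mem_nbhd_image ha.2⟩
  · exact mem_inter.2 ⟨mem_image_of_mem π hb.1, apply_mem_nbhd_image hb.2⟩

theorem nbhd_blowup (hF : (F : Set (Finset ι)).Sized r) (he : e ∈ ∂ (blowup π F)) :
    nbhd (blowup π F) e = ({v | π v ∈ nbhd F (e.image π)} : Finset α) := by
  ext v
  rw [mem_filter_univ]
  refine ⟨apply_mem_nbhd_image, fun hv => ?_⟩
  have hinj := injOn_of_mem_shadow_blowup he
  have hlt : #(e.image π) < r := by
    obtain ⟨E, hE, -, hcard⟩ :=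
      mem_shadow_iff_exists_mem_card_add_one.1 (image_mem_shadow_of_mem_shadow_blowup he)
    have := hF hE
    omega
  have hπv : π v ∉ e.image π := notMem_of_mem_nbhd hF hlt hv
  have hve : v ∉ e := fun h => hπv (mem_image_of_mem π h)
  exact mem_nbhd.2 ((insert_mem_blowup hve).2 ⟨⟨hinj, hπv⟩, mem_nbhd.1 hv⟩)

theorem card_nbhd_blowup (hF : (F : Set (Finset ι)).Sized r) (he : e ∈ ∂ (blowup π F)) :
    #(nbhd (blowup π F) e) = ∑ p ∈ nbhd F (e.image π), #{v | π v = p} := by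
  rw [nbhd_blowup hF he, card_eq_sum_card_fiberwise (f := π) (t := nbhd F (e.image π))]
  · refine sum_congr rfl fun p hp => ?_
    rw [filter_filter]
    congr 1 with v
    simp only [mem_filter_univ]
    exact ⟨And.right, fun h => ⟨h ▸ hp, h⟩⟩
  · intro v hv
    simpa using hv

theorem minPosCodeg_blowup (hr : 0 < r) (hF : (F : Set (Finset ι)).Sized r)
    (hπ : π.Surjective) :
    minPosCodeg r (blowup π F) =
      sInf {k | ∃ s ∈ ∂ F, ∑ p ∈ nbhd F s, #{v | π v = p} = k} := by
  rw [minPosCodeg, sshadow_eq_shadow hr (sized_blowup hF), ← image_shadow_blowup hπ]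
  congr! 3 with k
  rw [exists_mem_image]
  exact exists_congr fun e => and_congr_right fun he => by rw [card_nbhd_blowup hF he]

theorem isTrFree_blowup (h : ∀ s ∈ ∂ F, IsIndep F (nbhd F s)) : IsTrFree r (blowup π F) :=
  isTrFree_of_isIndep_nbhd fun _ => isIndep_nbhd_blowup h

end Blowup

section FiveWheel

variable {r : ℕ}

/-- The `j`-th edge `{u_1, …, u_{r-2}, v_j, v_{j+1}}` of the `r`-uniform `5`-wheel, where `u_i` is
`Sum.inl i` and `v_j` is `Sum.inr j`. -/
def wheelEdge (r : ℕ) (j : Fin 5) : Finset (Fin (r - 2) ⊕ Fin 5) :=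
  univ.disjSum {j, j + 1}

/-- The `r`-uniform `5`-wheel `W_5^r`, whose blowups along `wpart` are the `blowupW5 r x y`. -/
def fiveWheel (r : ℕ) : Finset (Finset (Fin (r - 2) ⊕ Fin 5)) :=
  univ.image (wheelEdge r)

theorem mem_fiveWheel {E : Finset (Fin (r - 2) ⊕ Fin 5)} :
    E ∈ fiveWheel r ↔ ∃ j, wheelEdge r j = E := by
  simp [fiveWheel]

theorem wheelEdge_mem_fiveWheel (j : Fin 5) : wheelEdge r j ∈ fiveWheel r :=
  mem_fiveWheel.2 ⟨j, rfl⟩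

theorem sized_fiveWheel (hr : 2 ≤ r) :
    (fiveWheel r : Set (Finset (Fin (r - 2) ⊕ Fin 5))).Sized r := fun E hE => by
  obtain ⟨j, rfl⟩ := mem_fiveWheel.1 hE
  rw [wheelEdge, card_disjSum, card_fin, card_pair (by simp)]
  omega

theorem mem_shadow_fiveWheel {s : Finset (Fin (r - 2) ⊕ Fin 5)} :
    s ∈ ∂ (fiveWheel r) ↔
      (∃ j i, (wheelEdge r j).erase (.inl i) = s) ∨ ∃ j, univ.disjSum {j} = s := by
  have erase_left (j : Fin 5) : (wheelEdge r j).erase (.inr j) = univ.disjSum {j + 1} := by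
    ext (i | k)
    · simp [wheelEdge]
    · simp only [wheelEdge, mem_erase, inr_mem_disjSum]
      grind
  have erase_right (j : Fin 5) : (wheelEdge r j).erase (.inr (j + 1)) = univ.disjSum {j} := by
    ext (i | k)
    · simp [wheelEdge]
    · simp only [wheelEdge, mem_erase, inr_mem_disjSum]
      grind
  simp only [mem_shadow_iff, mem_fiveWheel]
  constructor
  · rintro ⟨_, ⟨j, rfl⟩, i | k, hk, rfl⟩
    · exact .inl ⟨j, i, rfl⟩
    · obtain rfl | rfl : k = j ∨ k = j + 1 := by simpa [wheelEdge] using hk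
      · exact .inr ⟨_, (erase_left k).symm⟩
      · exact .inr ⟨_, (erase_right j).symm⟩
  · rintro (⟨j, i, rfl⟩ | ⟨j, rfl⟩)
    · exact ⟨_, ⟨j, rfl⟩, _, by simp [wheelEdge], rfl⟩
    · exact ⟨_, ⟨j, rfl⟩, _, by simp [wheelEdge], erase_right j⟩

theorem nbhd_fiveWheel_erase_inl (j : Fin 5) (i : Fin (r - 2)) :
    nbhd (fiveWheel r) ((wheelEdge r j).erase (.inl i)) = {.inl i} := by
  ext p
  rw [mem_nbhd, mem_fiveWheel, mem_singleton]
  constructor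
  · rintro ⟨k, hk⟩
    have : Sum.inl i ∈ wheelEdge r k := by simp [wheelEdge]
    simpa [hk, eq_comm] using this
  · rintro rfl
    exact ⟨j, (insert_erase (by simp [wheelEdge])).symm⟩

theorem nbhd_fiveWheel_disjSum (j : Fin 5) :
    nbhd (fiveWheel r) (univ.disjSum {j}) = {.inr (j - 1), .inr (j + 1)} := by
  have rim : ∀ a : Fin 5, (∃ k, {k, k + 1} = ({a, j} : Finset (Fin 5))) ↔
      a = j - 1 ∨ a = j + 1 := by
    decide +revert
  have hub : ¬ ∃ k, {k, k + 1} = ({j} : Finset (Fin 5)) := by decide +revert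
  ext (i | a)
  · simpa [mem_nbhd, mem_fiveWheel, wheelEdge, disjSum_eq_iff] using hub
  · simpa [mem_nbhd, mem_fiveWheel, wheelEdge, disjSum_eq_iff] using rim a

theorem isIndep_nbhd_fiveWheel {s : Finset (Fin (r - 2) ⊕ Fin 5)} (hs : s ∈ ∂ (fiveWheel r)) :
    IsIndep (fiveWheel r) (nbhd (fiveWheel r) s) := fun E hE => by
  obtain ⟨k, rfl⟩ := mem_fiveWheel.1 hE
  obtain ⟨j, i, rfl⟩ | ⟨j, rfl⟩ := mem_shadow_fiveWheel.1 hs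
  · rw [nbhd_fiveWheel_erase_inl]
    exact (card_le_card inter_subset_right).trans (card_singleton _).le
  · have not_both : ∀ j k : Fin 5, j - 1 ∈ ({k, k + 1} : Finset (Fin 5)) →
        j + 1 ∉ ({k, k + 1} : Finset (Fin 5)) := by decide
    rw [nbhd_fiveWheel_disjSum, card_le_one]
    simp only [wheelEdge, mem_inter, mem_insert, mem_singleton]
    rintro a ⟨ha, rfl | rfl⟩ b ⟨hb, rfl | rfl⟩
    · rfl
    · exact absurd (inr_mem_disjSum.1 hb) (not_both j k (inr_mem_disjSum.1 ha))
    · exact absurd (inr_mem_disjSum.1 ha) (not_both j k (inr_mem_disjSum.1 hb))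
    · rfl

theorem not_isRPartite_fiveWheel (hr : 2 ≤ r) : ¬ IsRPartite r (fiveWheel r) := by
  rw [isRPartite_iff_exists_coloring]
  rintro ⟨c, hc⟩
  have hstep (j : Fin 5) : c (.inr (j - 1)) = c (.inr (j + 1)) := by
    refine color_eq_of_insert_mem hc (e := univ.disjSum {j}) ?_ ?_ ?_ ?_ ?_
    · rw [card_disjSum, card_fin, card_singleton]
      omega
    · simp
    · simp
    · simp [← mem_nbhd, nbhd_fiveWheel_disjSum]
    · simp [← mem_nbhd, nbhd_fiveWheel_disjSum]
  have heq : c (.inr 4) = c (.inr 0) := ((hstep 1).trans (hstep 3)).symm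
  have h := hc _ (wheelEdge_mem_fiveWheel 4) (by simp [wheelEdge]) (by simp [wheelEdge]) heq
  simp at h

end FiveWheel

section BlowupFiveWheel

variable {r : ℕ} {x : Fin (r - 2) → ℕ} {y : Fin 5 → ℕ}

theorem blowupW5_eq_blowup : blowupW5 r x y = blowup wpart (fiveWheel r) := by
  have pair_iff (m : Fin 5 → ℕ) (j : Fin 5) :
      (m j = 1 ∧ m (j + 1) = 1 ∧ ∀ j', j' ≠ j → j' ≠ j + 1 → m j' = 0) ↔
        ∀ j', m j' = if j' ∈ ({j, j + 1} : Finset (Fin 5)) then 1 else 0 := by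
    grind
  ext E
  simp only [blowupW5, mem_filter_univ, mem_blowup, mem_fiveWheel, eq_comm (b := image _ _),
    ← exists_and_left, injOn_and_image_eq_iff_card_fiber, Sum.forall, wheelEdge, inl_mem_disjSum,
    inr_mem_disjSum, mem_univ, if_true, ← pair_iff]

theorem card_wheelVert : Fintype.card (WheelVert r x y) = ∑ i, x i + ∑ j, y j := by
  simp

theorem card_wpart_eq (p : Fin (r - 2) ⊕ Fin 5) :
    #{v : WheelVert r x y | wpart v = p} = Sum.elim x y p := by
  rw [card_filter, Fintype.sum_sum_type, Fintype.sum_sigma, Fintype.sum_sigma]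
  rcases p with i | j <;> simp [wpart]

theorem wpart_surjective (hx : ∀ i, 0 < x i) (hy : ∀ j, 0 < y j) :
    Function.Surjective (wpart : WheelVert r x y → _)
  | .inl i => ⟨.inl ⟨i, 0, hx i⟩, rfl⟩
  | .inr j => ⟨.inr ⟨j, 0, hy j⟩, rfl⟩

theorem isTrFree_blowupW5 : IsTrFree r (blowupW5 r x y) := by
  rw [blowupW5_eq_blowup]
  exact isTrFree_blowup fun _ => isIndep_nbhd_fiveWheel

theorem not_isRPartite_blowupW5 (hr : 2 ≤ r) (hx : ∀ i, 0 < x i) (hy : ∀ j, 0 < y j) :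
    ¬ IsRPartite r (blowupW5 r x y) := by
  rw [blowupW5_eq_blowup, isRPartite_blowup (wpart_surjective hx hy)]
  exact not_isRPartite_fiveWheel hr

theorem minPosCodeg_blowupW5 (hr : 2 ≤ r) (hx : ∀ i, 0 < x i) (hy : ∀ j, 0 < y j) :
    minPosCodeg r (blowupW5 r x y) =
      sInf (Set.range x ∪ Set.range fun j => y (j - 1) + y (j + 1)) := by
  rw [blowupW5_eq_blowup,
    minPosCodeg_blowup (by omega) (sized_fiveWheel hr) (wpart_surjective hx hy)]
  congr 1
  ext k
  have hne (j : Fin 5) : j - 1 ≠ j + 1 := by decide +revert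
  simp [mem_shadow_fiveWheel, or_and_right, exists_or, nbhd_fiveWheel_erase_inl,
    nbhd_fiveWheel_disjSum, card_wpart_eq, hne]

end BlowupFiveWheel

theorem stmt13_general {r n : ℕ} (hr : 2 ≤ r) (hn : 0 < n) (hmod : (2 * r + 1) ∣ n) :
    Fintype.card
        (WheelVert r (fun _ => 2 * n / (2 * r + 1)) (fun _ => n / (2 * r + 1))) = n ∧
    minPosCodeg r
        (blowupW5 r (fun _ => 2 * n / (2 * r + 1)) (fun _ => n / (2 * r + 1)))
      = 2 * n / (2 * r + 1) ∧
    IsTrFree r (blowupW5 r (fun _ => 2 * n / (2 * r + 1)) (fun _ => n / (2 * r + 1))) ∧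
    ¬ IsRPartite r
        (blowupW5 r (fun _ => 2 * n / (2 * r + 1)) (fun _ => n / (2 * r + 1))) := by
  obtain ⟨k, rfl⟩ := hmod
  have hk : 0 < k := Nat.pos_of_mul_pos_left hn
  have hy : (2 * r + 1) * k / (2 * r + 1) = k := Nat.mul_div_cancel_left _ (by omega)
  have hx : 2 * ((2 * r + 1) * k) / (2 * r + 1) = 2 * k := by
    rw [mul_left_comm, Nat.mul_div_cancel_left _ (by omega)]
  rw [hx, hy]
  have hx_pos : Fin (r - 2) → 0 < 2 * k := fun _ => by omega
  have hy_pos : Fin 5 → 0 < k := fun _ => hk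
  refine ⟨?_, ?_, isTrFree_blowupW5, not_isRPartite_blowupW5 hr hx_pos hy_pos⟩
  · obtain ⟨s, rfl⟩ := Nat.exists_eq_add_of_le' hr
    simp only [card_wheelVert, sum_const, card_fin, smul_eq_mul, Nat.add_sub_cancel]
    ring
  · rw [minPosCodeg_blowupW5 hr hx_pos hy_pos, ← two_mul, Set.range_const (ι := Fin 5),
      Set.union_eq_right.2 Set.range_const_subset, csInf_singleton]

/-- For `r ≥ 3` and `n > 0` divisible by `2r + 1`, the blowup of the `r`-uniform `5`-wheel
with `r - 2` parts of size `2n/(2r+1)` and `5` parts of size `n/(2r+1)` has exactly `n`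
vertices and minimum positive codegree exactly `2n/(2r+1)`; it is moreover `T_r`-free and
not `r`-partite. -/
theorem stmt13 {r n : ℕ} (hr : 3 ≤ r) (hn : 0 < n) (hmod : (2 * r + 1) ∣ n) :
    Fintype.card
        (WheelVert r (fun _ => 2 * n / (2 * r + 1)) (fun _ => n / (2 * r + 1))) = n ∧
    minPosCodeg r
        (blowupW5 r (fun _ => 2 * n / (2 * r + 1)) (fun _ => n / (2 * r + 1)))
      = 2 * n / (2 * r + 1) ∧
    IsTrFree r (blowupW5 r (fun _ => 2 * n / (2 * r + 1)) (fun _ => n / (2 * r + 1))) ∧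
    ¬ IsRPartite r
        (blowupW5 r (fun _ => 2 * n / (2 * r + 1)) (fun _ => n / (2 * r + 1))) :=
  stmt13_general (by omega) hn hmod
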